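/- arXiv:2509.18931 — 2 statements merged into one kernel-verified Lean document; each statement's English description precedes it below -/
import Mathlib

section
/- Let Z be a nonnegative real-valued random variable with E[Z] = 1 that satisfies the distributional fixed-point equation Z =_d U·(Z_1 + Z_2), where U is Uniform[0,1], Z_1 and Z_2 are copies of Z, and U, Z_1, Z_2 are mutually independent. Then Z is distributed as a rate-1 exponential random variable. -/
/-!
The characteristic function `φ` of a solution satisfies `φ t = ∫₀¹ φ (u t)² du` and has derivative
`i m` at `0`, where `m` is the mean. If `f` and `g` satisfy this equation, are bounded by `1` and
agree to first order at `0`, then `q t = ‖f t - g t‖ / |t|` extends continuously by `q 0 = 0`, and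
factoring `f² - g²` gives `q t ≤ ∫₀¹ 2 u q (u t) du`. Since `2 u du` is a probability measure on
`[0, 1]`, the maximum principle forces `q = 0`. Finally, the characteristic function
`t ↦ 1 / (1 - i m t)` of `m` times a rate-1 exponential variable satisfies the equation and has the
right derivative at `0`.
-/

open MeasureTheory

/-- The rate-1 exponential distribution: density `e^{-z}` on `(0, ∞)`. -/
noncomputable def expMeasure : Measure ℝ :=
  ((volume : Measure ℝ).restrict (Set.Ioi 0)).withDensity fun z =>
    ENNReal.ofReal (Real.exp (-z))

open Set intervalIntegral
open ProbabilityTheory hiding expMeasure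

lemma le_apply_zero_of_le_integral_mul {w q : ℝ → ℝ} (hw : Continuous w)
    (hw_pos : ∀ u ∈ Ioc (0 : ℝ) 1, 0 < w u) (hw_int : ∫ u in (0 : ℝ)..1, w u = 1)
    (hq : Continuous q) (hq_le : ∀ t, q t ≤ ∫ u in (0 : ℝ)..1, w u * q (u * t)) (t : ℝ) :
    q t ≤ q 0 := by
  obtain ⟨s, hs, hs_max⟩ := isCompact_Icc.exists_isMaxOn (nonempty_Icc.2 zero_le_one)
    (show ContinuousOn (fun u : ℝ ↦ q (u * t)) (Icc 0 1) by fun_prop)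
  have hle : ∀ u ∈ Icc (0 : ℝ) 1, q (u * (s * t)) ≤ q (s * t) := fun u hu ↦ by
    rw [← mul_assoc]
    exact hs_max ⟨mul_nonneg hu.1 hs.1, mul_le_one₀ hu.2 hs.1 hs.2⟩
  by_contra! hlt
  have hlt' : q 0 < q (s * t) := hlt.trans_le <| by
    simpa using hs_max (right_mem_Icc.2 zero_le_one)
  obtain ⟨u, hu_lt, hu⟩ : ∃ u, q (u * (s * t)) < q (s * t) ∧ u ∈ Ioo (0 : ℝ) 1 := by
    have hcont : Continuous fun u : ℝ ↦ q (u * (s * t)) := by fun_prop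
    have hnhds : ∀ᶠ u in nhds (0 : ℝ), q (u * (s * t)) < q (s * t) :=
      hcont.continuousAt.eventually_lt continuousAt_const (by simpa using hlt')
    exact ((hnhds.filter_mono nhdsWithin_le_nhds).and (Ioo_mem_nhdsGT zero_lt_one)).exists
  have hstrict : ∫ u in (0 : ℝ)..1, w u * q (u * (s * t)) < ∫ u in (0 : ℝ)..1, w u * q (s * t) :=
    integral_lt_integral_of_continuousOn_of_le_of_exists_lt zero_lt_one (by fun_prop) (by fun_prop)
      (fun v hv ↦ mul_le_mul_of_nonneg_left (hle v (Ioc_subset_Icc_self hv)) (hw_pos v hv).le)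
      ⟨u, Ioo_subset_Icc_self hu, mul_lt_mul_of_pos_left hu_lt (hw_pos u (Ioo_subset_Ioc_self hu))⟩
  rw [intervalIntegral.integral_mul_const, hw_int, one_mul] at hstrict
  exact (hq_le (s * t)).not_gt hstrict

section SquareMean

variable {A : Type*} [NormedCommRing A] [NormedAlgebra ℝ A] {f g : ℝ → A}

/-- The functional equation `f t = ∫₀¹ f (u t)² du`, which is the equation `Z =_d U (Z₁ + Z₂)` read
on characteristic functions. -/
def IsSquareMean (f : ℝ → A) : Prop :=
  ∀ t, f t = ∫ u in (0 : ℝ)..1, f (u * t) ^ 2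

lemma IsSquareMean.comp_const_mul (hf : IsSquareMean f) (c : ℝ) :
    IsSquareMean fun t ↦ f (c * t) := fun t ↦ by
  simpa only [mul_left_comm] using hf (c * t)

lemma IsSquareMean.norm_sub_le (hf : IsSquareMean f) (hg : IsSquareMean g) (hf_cont : Continuous f)
    (hg_cont : Continuous g) (hf_le : ∀ t, ‖f t‖ ≤ 1) (hg_le : ∀ t, ‖g t‖ ≤ 1) (t : ℝ) :
    ‖f t - g t‖ ≤ ∫ u in (0 : ℝ)..1, 2 * ‖f (u * t) - g (u * t)‖ := by
  have hdiff : f t - g t = ∫ u in (0 : ℝ)..1, (f (u * t) ^ 2 - g (u * t) ^ 2) := by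
    rw [hf t, hg t]
    exact (integral_sub (Continuous.intervalIntegrable (by fun_prop) _ _)
      (Continuous.intervalIntegrable (by fun_prop) _ _)).symm
  rw [hdiff]
  refine norm_integral_le_of_norm_le zero_le_one (.of_forall fun u _ ↦ ?_)
    (Continuous.intervalIntegrable (by fun_prop) _ _)
  calc ‖f (u * t) ^ 2 - g (u * t) ^ 2‖
      = ‖(f (u * t) + g (u * t)) * (f (u * t) - g (u * t))‖ := by rw [sq_sub_sq]
    _ ≤ ‖f (u * t) + g (u * t)‖ * ‖f (u * t) - g (u * t)‖ := norm_mul_le _ _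
    _ ≤ 2 * ‖f (u * t) - g (u * t)‖ := by
      gcongr
      linarith [norm_add_le (f (u * t)) (g (u * t)), hf_le (u * t), hg_le (u * t)]

theorem IsSquareMean.eq_of_hasDerivAt_zero {f' : A} (hf : IsSquareMean f) (hg : IsSquareMean g)
    (hf_cont : Continuous f) (hg_cont : Continuous g) (hf_le : ∀ t, ‖f t‖ ≤ 1)
    (hg_le : ∀ t, ‖g t‖ ≤ 1) (hf_deriv : HasDerivAt f f' 0) (hg_deriv : HasDerivAt g f' 0)
    (h_zero : f 0 = g 0) : f = g := by
  set d : ℝ → A := dslope (f - g) 0 with hd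
  have hderiv : HasDerivAt (f - g) 0 0 := by simpa using hf_deriv.sub hg_deriv
  have hd_zero : d 0 = 0 := by rw [hd, dslope_same, hderiv.deriv]
  have hd_cont : Continuous d := continuousOn_univ.1 <| (continuousOn_dslope Filter.univ_mem).2
    ⟨(hf_cont.sub hg_cont).continuousOn, hderiv.differentiableAt⟩
  have hsmul (t : ℝ) : t • d t = f t - g t := by
    simpa [hd, h_zero] using sub_smul_dslope (f - g) 0 t
  have hd_le (t : ℝ) : ‖d t‖ ≤ ∫ u in (0 : ℝ)..1, 2 * u * ‖d (u * t)‖ := by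
    rcases eq_or_ne t 0 with rfl | ht
    · simp [hd_zero]
    refine le_of_mul_le_mul_left ?_ (abs_pos.2 ht)
    calc |t| * ‖d t‖ = ‖f t - g t‖ := by rw [← hsmul, norm_smul, Real.norm_eq_abs]
      _ ≤ ∫ u in (0 : ℝ)..1, 2 * ‖f (u * t) - g (u * t)‖ :=
        hf.norm_sub_le hg hf_cont hg_cont hf_le hg_le t
      _ = ∫ u in (0 : ℝ)..1, |t| * (2 * u * ‖d (u * t)‖) := by
        refine integral_congr fun u hu ↦ ?_
        rw [uIcc_of_le zero_le_one] at hu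
        simp only [← hsmul, norm_smul, Real.norm_eq_abs, abs_mul, abs_of_nonneg hu.1]
        ring
      _ = |t| * ∫ u in (0 : ℝ)..1, 2 * u * ‖d (u * t)‖ := integral_const_mul _ _
  have hw_int : ∫ u in (0 : ℝ)..1, 2 * u = 1 := by
    rw [intervalIntegral.integral_const_mul, integral_id]
    norm_num
  funext t
  have hd_nonpos : ‖d t‖ ≤ ‖d 0‖ :=
    le_apply_zero_of_le_integral_mul (by fun_prop) (fun u hu ↦ mul_pos two_pos hu.1)
      hw_int hd_cont.norm hd_le t
  rw [hd_zero, norm_zero, norm_le_zero_iff] at hd_nonpos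
  rw [← sub_eq_zero, ← hsmul, hd_nonpos, smul_zero]

end SquareMean

section CharFun

variable {μ ν : Measure ℝ}

lemma charFun_mconv [IsFiniteMeasure μ] [IsFiniteMeasure ν] (t : ℝ) :
    charFun (μ ∗ₘ ν) t = ∫ u, charFun ν (u * t) ∂μ := by
  have hint : Integrable (fun p : ℝ × ℝ ↦ Complex.exp (t * (p.1 * p.2 : ℝ) * Complex.I))
      (μ.prod ν) :=
    .of_bound (by fun_prop) 1 <| .of_forall fun p ↦ by
      exact_mod_cast (Complex.norm_exp_ofReal_mul_I (t * (p.1 * p.2))).le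
  rw [charFun_apply_real, Measure.mconv, integral_map (by fun_prop) (by fun_prop),
    integral_prod _ hint]
  congr with u
  rw [charFun_apply_real]
  congr with x
  push_cast
  ring_nf

lemma hasDerivAt_charFun_zero [IsProbabilityMeasure ν] (hint : Integrable id ν) :
    HasDerivAt (charFun ν) ((∫ x, x ∂ν : ℝ) * Complex.I) 0 := by
  have hmem : MemLp id (1 : ℕ) ν := by simpa using memLp_one_iff_integrable.2 hint
  have hderiv : deriv (charFun ν) 0 = (∫ x, x ∂ν : ℝ) * Complex.I := by
    simpa [mul_comm] using iteratedDeriv_charFun_zero hmem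
  rw [← hderiv]
  exact ((contDiff_charFun hmem).differentiable (by simp)).differentiableAt.hasDerivAt

lemma isSquareMean_charFun_of_eq_mconv_conv [IsFiniteMeasure ν]
    (hfix : ν = volume.restrict (Icc 0 1) ∗ₘ (ν ∗ ν)) : IsSquareMean (charFun ν) := fun t ↦ by
  calc charFun ν t = charFun (volume.restrict (Icc 0 1) ∗ₘ (ν ∗ ν)) t := by rw [← hfix]
    _ = ∫ u in (0 : ℝ)..1, charFun ν (u * t) ^ 2 := by
      simp only [charFun_mconv, charFun_conv, ← sq, integral_Icc_eq_integral_Ioc,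
        integral_of_le zero_le_one]

end CharFun

instance isProbabilityMeasure_expMeasure : IsProbabilityMeasure expMeasure where
  measure_univ := by
    rw [expMeasure, withDensity_apply _ .univ, Measure.restrict_univ,
      ← ofReal_integral_eq_lintegral_ofReal (integrableOn_exp_neg_Ioi 0)
        (.of_forall fun x ↦ (Real.exp_pos _).le),
      integral_exp_neg_Ioi_zero, ENNReal.ofReal_one]

lemma one_sub_ofReal_mul_I_ne_zero (t : ℝ) : (1 - t * Complex.I : ℂ) ≠ 0 := fun h ↦ by
  simpa using congrArg Complex.re h

lemma charFun_expMeasure (t : ℝ) : charFun expMeasure t = (1 - t * Complex.I)⁻¹ := by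
  have hre : (t * Complex.I - 1 : ℂ).re < 0 := by simp
  calc charFun expMeasure t
      = ∫ x in Ioi (0 : ℝ), Real.exp (-x) • Complex.exp (t * x * Complex.I) := by
        rw [charFun_apply_real, expMeasure,
          integral_withDensity_eq_integral_toReal_smul (by fun_prop) (by simp)]
        simp only [ENNReal.toReal_ofReal (Real.exp_pos _).le]
    _ = ∫ x in Ioi (0 : ℝ), Complex.exp ((t * Complex.I - 1) * x) := by
        congr with x
        rw [Complex.real_smul, Complex.ofReal_exp, ← Complex.exp_add]
        push_cast
        ring_nf
    _ = (1 - t * Complex.I)⁻¹ := by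
        rw [integral_exp_mul_complex_Ioi hre, Complex.ofReal_zero, mul_zero, Complex.exp_zero,
          neg_div, ← div_neg, neg_sub, one_div]

lemma hasDerivAt_charFun_expMeasure_zero : HasDerivAt (charFun expMeasure) Complex.I 0 := by
  have hderiv : HasDerivAt (fun t : ℝ ↦ (1 - t * Complex.I : ℂ)) (-Complex.I) 0 := by
    simpa using ((Complex.ofRealCLM.hasDerivAt (x := 0)).mul_const Complex.I).const_sub 1
  rw [funext charFun_expMeasure]
  simpa using hderiv.fun_inv (one_sub_ofReal_mul_I_ne_zero 0)

lemma isSquareMean_charFun_expMeasure : IsSquareMean (charFun expMeasure) := fun t ↦ by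
  have hne (u : ℝ) : (1 - u * t * Complex.I : ℂ) ≠ 0 := by
    exact_mod_cast one_sub_ofReal_mul_I_ne_zero (u * t)
  have hderiv (u : ℝ) : HasDerivAt (fun u : ℝ ↦ u * (1 - u * t * Complex.I : ℂ)⁻¹)
      ((1 - u * t * Complex.I : ℂ)⁻¹ ^ 2) u := by
    have hid : HasDerivAt (fun u : ℝ ↦ (u : ℂ)) 1 u := Complex.ofRealCLM.hasDerivAt
    refine (hid.fun_mul ((((hid.mul_const (t : ℂ)).mul_const Complex.I).const_sub 1).fun_inv
      (hne u))).congr_deriv ?_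
    field [hne u]
  have hcont : Continuous fun u : ℝ ↦ (1 - u * t * Complex.I : ℂ)⁻¹ ^ 2 :=
    (Continuous.inv₀ (by fun_prop) hne).pow 2
  simp only [charFun_expMeasure, Complex.ofReal_mul]
  rw [integral_eq_sub_of_hasDerivAt (fun u _ ↦ hderiv u) (hcont.intervalIntegrable _ _)]
  simp

theorem eq_map_expMeasure_of_eq_mconv_conv {ν : Measure ℝ} [IsProbabilityMeasure ν]
    (hint : Integrable id ν) (hfix : ν = volume.restrict (Icc 0 1) ∗ₘ (ν ∗ ν)) :
    ν = expMeasure.map ((∫ x, x ∂ν) * ·) := by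
  set m : ℝ := ∫ x, x ∂ν
  have : IsProbabilityMeasure (expMeasure.map (m * ·)) :=
    Measure.isProbabilityMeasure_map (by fun_prop)
  have hmean : IsSquareMean (charFun (expMeasure.map (m * ·))) := by
    simpa only [← charFun_map_mul] using isSquareMean_charFun_expMeasure.comp_const_mul m
  have hderiv : HasDerivAt (charFun (expMeasure.map (m * ·))) (m * Complex.I) 0 := by
    have hexp : HasDerivAt (charFun expMeasure) Complex.I (m * 0) := by
      simpa using hasDerivAt_charFun_expMeasure_zero
    rw [funext (charFun_map_mul m)]
    simpa [Function.comp_def] using hexp.scomp (0 : ℝ) ((hasDerivAt_id (0 : ℝ)).const_mul m)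
  exact Measure.ext_of_charFun <|
    (isSquareMean_charFun_of_eq_mconv_conv hfix).eq_of_hasDerivAt_zero hmean continuous_charFun
      continuous_charFun norm_charFun_le_one norm_charFun_le_one
      (hasDerivAt_charFun_zero hint) hderiv (by simp)

lemma map_mul_add_eq_map_mconv_map_conv_map {Ω : Type*} [MeasurableSpace Ω] {μ : Measure Ω}
    {X Y Z : Ω → ℝ} (hX : AEMeasurable X μ) (hY : AEMeasurable Y μ) (hZ : AEMeasurable Z μ)
    (hindep : iIndepFun ![X, Y, Z] μ) :
    μ.map (fun ω ↦ X ω * (Y ω + Z ω)) = μ.map X ∗ₘ (μ.map Y ∗ μ.map Z) := by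
  have : IsProbabilityMeasure μ := hindep.isProbabilityMeasure
  have hmeas : ∀ i, AEMeasurable (![X, Y, Z] i) μ := by
    simp [Fin.forall_fin_succ, hX, hY, hZ]
  have hYZ : IndepFun Y Z μ := hindep.indepFun (i := 1) (j := 2) (by decide)
  have hX_YZ : IndepFun X (Y + Z) μ :=
    hindep.indepFun_add_right₀ hmeas 0 1 2 (by decide) (by decide)
  rw [← hYZ.map_add_eq_map_conv_map₀ hY hZ, ← hX_YZ.map_mul_eq_map_mconv_map₀ hX (hY.add hZ)]
  rfl

theorem fixedPoint_is_exponential_general {Ω : Type*} [MeasurableSpace Ω] (μ : Measure Ω)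
    (Z U Z₁ Z₂ : Ω → ℝ) (hZ : Integrable Z μ)
    (hU : AEMeasurable U μ) (hZ₁ : AEMeasurable Z₁ μ) (hZ₂ : AEMeasurable Z₂ μ)
    (hUdist : μ.map U = volume.restrict (Icc 0 1))
    (hZ₁dist : μ.map Z₁ = μ.map Z) (hZ₂dist : μ.map Z₂ = μ.map Z)
    (hindep : iIndepFun ![U, Z₁, Z₂] μ)
    (hfix : μ.map Z = μ.map fun ω ↦ U ω * (Z₁ ω + Z₂ ω)) :
    μ.map Z = expMeasure.map ((∫ ω, Z ω ∂μ) * ·) := by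
  have : IsProbabilityMeasure μ := hindep.isProbabilityMeasure
  have : IsProbabilityMeasure (μ.map Z) := Measure.isProbabilityMeasure_map hZ.aemeasurable
  have hint : Integrable id (μ.map Z) :=
    (integrable_map_measure (by fun_prop) hZ.aemeasurable).2 hZ
  have hmean : ∫ x, x ∂μ.map Z = ∫ ω, Z ω ∂μ := integral_map hZ.aemeasurable (by fun_prop)
  rw [map_mul_add_eq_map_mconv_map_conv_map hU hZ₁ hZ₂ hindep, hUdist, hZ₁dist, hZ₂dist] at hfix
  rw [← hmean]
  exact eq_map_expMeasure_of_eq_mconv_conv hint hfix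

/-- If `Z ≥ 0` has mean 1 and satisfies the distributional fixed-point equation
`Z =_d U · (Z₁ + Z₂)`, where `U` is Uniform[0,1], `Z₁, Z₂` are copies of `Z`, and
`U, Z₁, Z₂` are mutually independent, then `Z` is a rate-1 exponential. -/
theorem fixedPoint_is_exponential {Ω : Type*} [MeasurableSpace Ω] (μ : Measure Ω)
    [IsProbabilityMeasure μ] (Z U Z₁ Z₂ : Ω → ℝ)
    (hZ : Measurable Z) (hU : Measurable U) (hZ₁ : Measurable Z₁) (hZ₂ : Measurable Z₂)
    (hnonneg : ∀ ω, 0 ≤ Z ω)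
    (hmean : ∫ ω, Z ω ∂μ = 1)
    (hUdist : Measure.map U μ = (volume : Measure ℝ).restrict (Set.Icc 0 1))
    (hZ₁dist : Measure.map Z₁ μ = Measure.map Z μ)
    (hZ₂dist : Measure.map Z₂ μ = Measure.map Z μ)
    (hindep : ProbabilityTheory.iIndepFun ![U, Z₁, Z₂] μ)
    (hfix : Measure.map Z μ = Measure.map (fun ω => U ω * (Z₁ ω + Z₂ ω)) μ) :
    Measure.map Z μ = expMeasure := by
  simpa [hmean] using fixedPoint_is_exponential_general μ Z U Z₁ Z₂
    (integrable_of_integral_eq_one hmean) hU.aemeasurable hZ₁.aemeasurable hZ₂.aemeasurable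
    hUdist hZ₁dist hZ₂dist hindep hfix
end

section
/- Let Z, Z' be independent rate-1 exponential random variables and let X be a mixed Poisson random variable with random parameter Z·Z', i.e., P(X = x) = E[(Z·Z')^x e^{−Z·Z'} / x!] for x ∈ ℕ. Then X is heavy-tailed: for every t > 0, e^{t·x} · P(X > x) → ∞ as x → ∞ along the natural numbers. -/
open MeasureTheory Filter

open ProbabilityTheory Set

/-!
Given `Z = z`, integrating out the exponential `Z'` turns the Poisson law with parameter `z * Z'`
into the geometric law with success probability `1 / (1 + z)`. Since `Z` is unbounded, that success
probability is arbitrarily small with positive probability, so for each `q < 1` the mass function of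
`X` dominates a positive multiple of `q ^ x`. Taking `q = exp (-t / 2)` gives the claim.
-/

lemma integral_expMeasure {r : ℝ} (hr : 0 < r) (f : ℝ → ℝ) :
    ∫ z, f z ∂expMeasure r = ∫ z in Ioi 0, f z * (r * Real.exp (-(r * z))) := by
  have hdensity : ∀ z, (exponentialPDF r z).toReal • f z
      = (Ici 0).indicator (fun z => f z * (r * Real.exp (-(r * z)))) z := by
    intro z
    by_cases hz : 0 ≤ z
    · rw [exponentialPDF_of_nonneg hz, ENNReal.toReal_ofReal (by positivity),
        indicator_of_mem (mem_Ici.2 hz), smul_eq_mul, mul_comm]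
    · rw [exponentialPDF_of_neg (not_le.1 hz), indicator_of_notMem (by simpa using hz),
        ENNReal.toReal_zero, zero_smul]
  calc ∫ z, f z ∂expMeasure r = ∫ z, (exponentialPDF r z).toReal • f z :=
        integral_withDensity_eq_integral_toReal_smul
          (measurable_exponentialPDFReal r).ennreal_ofReal (by simp) f
    _ = ∫ z in Ioi 0, f z * (r * Real.exp (-(r * z))) := by
        simp_rw [hdensity]
        rw [integral_indicator measurableSet_Ici, integral_Ici_eq_integral_Ioi]

lemma setIntegral_Ioi_mul_exp_neg_eq_integral_expMeasure (f : ℝ → ℝ → ℝ) :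
    ∫ z in Ioi 0, ∫ z' in Ioi 0, f z z' * Real.exp (-z) * Real.exp (-z')
      = ∫ z, ∫ z', f z z' ∂expMeasure 1 ∂expMeasure 1 := by
  simp only [integral_expMeasure one_pos, ← integral_mul_const, one_mul, mul_right_comm]

lemma expMeasure_Ioi_ne_zero {r : ℝ} (hr : 0 < r) (b : ℝ) : expMeasure r (Ioi b) ≠ 0 := by
  have := isProbabilityMeasure_expMeasure hr
  have hcdf : (expMeasure r).real (Iic b) < 1 := by
    rw [← cdf_eq_real, cdf_expMeasure_eq hr]
    split_ifs
    · linarith [Real.exp_pos (-(r * b))]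
    · exact one_pos
  rw [← compl_Iic, Ne, prob_compl_eq_zero_iff measurableSet_Iic]
  intro hone
  simp [measureReal_def, hone] at hcdf

lemma ae_nonneg_expMeasure (r : ℝ) : ∀ᵐ z ∂expMeasure r, 0 ≤ z := by
  simp only [ae_iff, not_le]
  exact (withDensity_apply _ measurableSet_Iio).trans (lintegral_exponentialPDF_of_nonpos le_rfl)

lemma integral_poisson_expMeasure {r z : ℝ} (hr : 0 < r) (hz : 0 < r + z) (n : ℕ) :
    ∫ z', (z * z') ^ n / (n.factorial : ℝ) * Real.exp (-(z * z')) ∂expMeasure r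
      = (1 - r / (r + z)) ^ n * (r / (r + z)) := by
  have hintegrand : ∀ z' : ℝ,
      (z * z') ^ n / (n.factorial : ℝ) * Real.exp (-(z * z')) * (r * Real.exp (-(r * z')))
        = z ^ n / n.factorial * r
          * (z' ^ ((n + 1 : ℝ) - 1) * Real.exp (-((r + z) * z'))) := by
    intro z'
    have hexp : Real.exp (-((r + z) * z')) = Real.exp (-(z * z')) * Real.exp (-(r * z')) := by
      rw [← Real.exp_add]
      ring_nf
    rw [hexp, add_sub_cancel_right, Real.rpow_natCast, mul_pow]
    ring
  have hfact : (n.factorial : ℝ) ≠ 0 := by positivity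
  calc ∫ z', (z * z') ^ n / (n.factorial : ℝ) * Real.exp (-(z * z')) ∂expMeasure r
      = z ^ n / n.factorial * r * ((1 / (r + z)) ^ (n + 1) * n.factorial) := by
        rw [integral_expMeasure hr]
        simp_rw [hintegrand]
        rw [integral_const_mul, Real.integral_rpow_mul_exp_neg_mul_Ioi (by positivity) hz,
          Real.Gamma_nat_eq_factorial]
        norm_cast
    _ = (1 - r / (r + z)) ^ n * (r / (r + z)) := by
        rw [one_sub_div hz.ne', add_sub_cancel_left, div_pow, div_pow, one_pow, pow_succ]
        field_simp

lemma exists_mul_pow_le_integral_geometric {α : Type*} [MeasurableSpace α] {ν : Measure α}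
    {p : α → ℝ} (hp : Integrable p ν) (hp_pos : ∀ᵐ a ∂ν, 0 < p a) (hp_le : ∀ᵐ a ∂ν, p a ≤ 1)
    (hp_small : ∀ ε > 0, ν {a | p a < ε} ≠ 0) {q : ℝ} (hq0 : 0 ≤ q) (hq1 : q < 1) :
    ∃ c > 0, ∀ n : ℕ, c * q ^ n ≤ ∫ a, (1 - p a) ^ n * p a ∂ν := by
  set s : Set α := {a | p a < 1 - q}
  have hs : NullMeasurableSet s ν := nullMeasurableSet_lt hp.aemeasurable aemeasurable_const
  refine ⟨∫ a in s, p a ∂ν, ?_, fun n => ?_⟩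
  · have hs_support : s ≤ᵐ[ν] (Function.support p ∩ s : Set α) := by
      filter_upwards [hp_pos] with a ha has using ⟨ha.ne', has⟩
    have hs_pos : 0 < ν s := pos_iff_ne_zero.2 (hp_small _ (sub_pos.2 hq1))
    refine (setIntegral_pos_iff_support_of_nonneg_ae
      (ae_restrict_of_ae (hp_pos.mono fun _ => le_of_lt)) hp.integrableOn).2 ?_
    exact hs_pos.trans_le (measure_mono_ae hs_support)
  · have hint : Integrable (fun a => (1 - p a) ^ n * p a) ν := by
      refine hp.bdd_mul (c := 1) (by fun_prop) ?_
      filter_upwards [hp_pos, hp_le] with a ha0 ha1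
      rw [Real.norm_of_nonneg (pow_nonneg (sub_nonneg.2 ha1) n)]
      exact pow_le_one₀ (sub_nonneg.2 ha1) (sub_le_self 1 ha0.le)
    calc (∫ a in s, p a ∂ν) * q ^ n = ∫ a in s, q ^ n * p a ∂ν := by
          rw [integral_const_mul, mul_comm]
      _ ≤ ∫ a in s, (1 - p a) ^ n * p a ∂ν := by
          refine setIntegral_mono_ae_restrict (hp.const_mul _).integrableOn hint.integrableOn ?_
          filter_upwards [ae_restrict_of_ae hp_pos, ae_restrict_mem₀ hs] with a ha has
          have hq : q ≤ 1 - p a := (lt_sub_comm.1 has).le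
          gcongr
      _ ≤ ∫ a, (1 - p a) ^ n * p a ∂ν := by
          refine setIntegral_le_integral hint ?_
          filter_upwards [hp_pos, hp_le] with a ha0 ha1
          exact mul_nonneg (pow_nonneg (sub_nonneg.2 ha1) n) ha0.le

lemma exists_mul_pow_le_integral_poisson_expMeasure {ν : Measure ℝ} [IsFiniteMeasure ν]
    (hν_nonneg : ∀ᵐ z ∂ν, 0 ≤ z) (hν_unbounded : ∀ b, ν (Ioi b) ≠ 0) {r : ℝ} (hr : 0 < r)
    {q : ℝ} (hq0 : 0 ≤ q) (hq1 : q < 1) :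
    ∃ c > 0, ∀ n : ℕ, c * q ^ n
      ≤ ∫ z, ∫ z', (z * z') ^ n / (n.factorial : ℝ) * Real.exp (-(z * z')) ∂expMeasure r ∂ν := by
  have hpos : ∀ᵐ z ∂ν, 0 < r / (r + z) := by
    filter_upwards [hν_nonneg] with z hz
    positivity
  have hle : ∀ᵐ z ∂ν, r / (r + z) ≤ 1 := by
    filter_upwards [hν_nonneg] with z hz
    exact div_le_one_of_le₀ (by linarith) (by positivity)
  have hint : Integrable (fun z => r / (r + z)) ν := by
    refine Integrable.of_mem_Icc 0 1 (by fun_prop) ?_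
    filter_upwards [hpos, hle] with z h0 h1 using ⟨h0.le, h1⟩
  have hsmall : ∀ ε > 0, ν {z | r / (r + z) < ε} ≠ 0 := by
    refine fun ε hε hzero => hν_unbounded (r / ε) (measure_mono_null (fun z hz => ?_) hzero)
    have hz : r / ε < z := hz
    have hz_pos : 0 < z := (div_pos hr hε).trans hz
    exact (div_lt_comm₀ hε (add_pos hr hz_pos)).1 (hz.trans (lt_add_of_pos_left z hr))
  obtain ⟨c, hc, hbound⟩ := exists_mul_pow_le_integral_geometric hint hpos hle hsmall hq0 hq1
  refine ⟨c, hc, fun n => (hbound n).trans_eq (integral_congr_ae ?_)⟩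
  filter_upwards [hν_nonneg] with z hz
  exact (integral_poisson_expMeasure hr (by positivity) n).symm

lemma tendsto_exp_mul_measureReal_lt_atTop {Ω : Type*} [MeasurableSpace Ω] {μ : Measure Ω}
    [IsFiniteMeasure μ] {X : Ω → ℕ}
    (hX : ∀ q : ℝ, 0 < q → q < 1 → ∃ c > 0, ∀ n, c * q ^ n ≤ μ.real {ω | X ω = n})
    {t : ℝ} (ht : 0 < t) :
    Tendsto (fun n : ℕ => Real.exp (t * n) * μ.real {ω | n < X ω}) atTop atTop := by
  obtain ⟨c, hc, hbound⟩ := hX (Real.exp (-(t / 2))) (Real.exp_pos _)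
    (Real.exp_lt_one_iff.2 (by linarith))
  have hgrowth : Tendsto (fun n : ℕ => Real.exp (t / 2) ^ n * (c * Real.exp (-(t / 2))))
      atTop atTop :=
    (tendsto_pow_atTop_atTop_of_one_lt (Real.one_lt_exp_iff.2 (by positivity))).atTop_mul_const
      (by positivity)
  refine tendsto_atTop_mono (fun n => ?_) hgrowth
  calc Real.exp (t / 2) ^ n * (c * Real.exp (-(t / 2)))
      = Real.exp (t * n) * (c * Real.exp (-(t / 2)) ^ (n + 1)) := by
        have hsplit : Real.exp (t * n) = Real.exp (t / 2) ^ n * Real.exp (t / 2) ^ n := by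
          rw [← Real.exp_nat_mul, ← Real.exp_add]
          ring_nf
        rw [hsplit, Real.exp_neg, inv_pow, pow_succ]
        field_simp
    _ ≤ Real.exp (t * n) * μ.real {ω | X ω = n + 1} := by
        gcongr
        exact hbound (n + 1)
    _ ≤ Real.exp (t * n) * μ.real {ω | n < X ω} := by
        have hsub : {ω | X ω = n + 1} ⊆ {ω | n < X ω} := fun ω hω =>
          n.lt_succ_self.trans_eq (Eq.symm hω)
        gcongr
        exact measure_ne_top μ _

theorem mixedPoisson_heavyTailed_general {Ω : Type*} [MeasurableSpace Ω] (μ : Measure Ω)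
    [IsFiniteMeasure μ] (X : Ω → ℕ) (ν : Measure ℝ) [IsFiniteMeasure ν]
    (hν_nonneg : ∀ᵐ z ∂ν, 0 ≤ z) (hν_unbounded : ∀ b, ν (Ioi b) ≠ 0) {r : ℝ} (hr : 0 < r)
    (hdist : ∀ x : ℕ, μ.real {ω | X ω = x}
      = ∫ z, ∫ z', (z * z') ^ x / (x.factorial : ℝ) * Real.exp (-(z * z')) ∂expMeasure r ∂ν)
    (t : ℝ) (ht : 0 < t) :
    Tendsto (fun x : ℕ => Real.exp (t * x) * μ.real {ω | x < X ω}) atTop atTop := by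
  refine tendsto_exp_mul_measureReal_lt_atTop (fun q hq0 hq1 => ?_) ht
  simpa only [hdist] using
    exists_mul_pow_le_integral_poisson_expMeasure hν_nonneg hν_unbounded hr hq0.le hq1

/-- A mixed Poisson random variable with parameter `Z·Z'`, for `Z, Z'` independent
rate-1 exponentials, is heavy-tailed: `e^{t x} P(X > x) → ∞` for every `t > 0`. -/
theorem mixedPoisson_heavyTailed {Ω : Type*} [MeasurableSpace Ω] (μ : Measure Ω)
    [IsProbabilityMeasure μ] (X : Ω → ℕ)
    (hdist : ∀ x : ℕ, (μ {ω | X ω = x}).toReal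
      = ∫ z in Set.Ioi (0:ℝ), ∫ z' in Set.Ioi (0:ℝ),
          ((z * z') ^ x / (x.factorial : ℝ)) * Real.exp (-(z * z'))
            * Real.exp (-z) * Real.exp (-z')) :
    ∀ t : ℝ, 0 < t →
      Tendsto (fun x : ℕ => Real.exp (t * x) * (μ {ω | x < X ω}).toReal)
        atTop atTop :=
  have := isProbabilityMeasure_expMeasure one_pos
  mixedPoisson_heavyTailed_general μ X (expMeasure 1) (ae_nonneg_expMeasure 1)
    (expMeasure_Ioi_ne_zero one_pos) one_pos
    fun x => (hdist x).trans (setIntegral_Ioi_mul_exp_neg_eq_integral_expMeasure _)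
end
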